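/- arXiv:2202.11862 — 2 statements merged into one kernel-verified Lean document; each statement's English description precedes it below -/
import Mathlib

section
/- Let Θ and Y be finite types, let p : Θ → (pmf on Y) be a parameterized model, q a pmf on Θ with q(θ₀) > 0 for a given θ₀ ∈ Θ, D a pmf on Y with p(y|θ₀) > 0 whenever D(y) > 0, and β ≥ 0. Then the infimum, over all pmfs μ on Θ × Y whose Θ-marginal is the point mass δ_{θ₀} and whose Y-marginal is D, of Σ_{θ : μ_Θ(θ)>0} μ_Θ(θ)·D( μ(Y|θ) ‖ p(·|θ) ) + β·D( μ_Θ ‖ q ) equals Σ_y D(y)·log(1/p(y|θ₀)) + β·log(1/q(θ₀)) − H(D). (In words: the inconsistency of believing a trusted data distribution D, a prior q over parameters with confidence β, the model p, and the event Θ = θ₀, is the cross-entropy loss of p(·|θ₀) on D plus the regularizer β·log(1/q(θ₀)), minus a constant H(D) depending only on the data.) -/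
open scoped BigOperators ENNReal

/-- A probability mass function on a finite type. -/
def IsPMF {X : Type*} [Fintype X] (μ : X → ℝ) : Prop :=
  (∀ x, 0 ≤ μ x) ∧ ∑ x, μ x = 1

open Classical in
/-- Relative entropy (KL divergence) valued in `[0,∞]`. -/
noncomputable def KLdiv {X : Type*} [Fintype X] (μ ν : X → ℝ) : ℝ≥0∞ :=
  if ∀ x, ν x = 0 → μ x = 0 then
    ENNReal.ofReal (∑ x, μ x * Real.log (μ x / ν x))
  else ⊤

/-!
The two marginal constraints leave a single feasible law, the product `δ_{θ₀} ⊗ D`, so the infimum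
is the value there. Its only conditional law is `D`, so that value is `D(D ‖ p(·|θ₀))`, which is
cross-entropy minus entropy, plus `β · D(δ_{θ₀} ‖ q) = β · log (1 / q θ₀)`. Gibbs' inequality makes
the first of these terms nonnegative, which is what lets the truncation at `0` hidden in
`ENNReal.ofReal` pass through the sum.
-/

/-- The product law of `μ` and `ν`, as a function on pairs. -/
def productPMF {X Y : Type*} (μ : X → ℝ) (ν : Y → ℝ) (z : X × Y) : ℝ :=
  μ z.1 * ν z.2

/-- The cross-entropy `∑ x, μ x * log (1 / ν x)` of `ν` relative to `μ`. The Shannon entropy of `μ`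
is `crossEntropy μ μ`. Real-valued: a zero of `ν` in the support of `μ` contributes `0`, not `∞`. -/
noncomputable def crossEntropy {X : Type*} [Fintype X] (μ ν : X → ℝ) : ℝ :=
  ∑ x, μ x * Real.log (1 / ν x)

/-- The conditional relative entropy of the kernel `p` from a joint law `μ` on `X × Y`: the mean,
under the `X`-marginal of `μ`, of the divergence of the conditional law `μ(Y | x)` from `p x`. Only
the `x` at which this conditional law exists are summed over. -/
noncomputable def condKLdiv {X Y : Type*} [Fintype X] [Fintype Y] (μ : X × Y → ℝ)
    (p : X → Y → ℝ) : ℝ≥0∞ :=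
  ∑ x ∈ Finset.univ.filter (fun x => 0 < ∑ y, μ (x, y)),
    ENNReal.ofReal (∑ y, μ (x, y)) * KLdiv (fun y => μ (x, y) / ∑ y', μ (x, y')) (p x)

lemma IsPMF.le_one {X : Type*} [Fintype X] {μ : X → ℝ} (hμ : IsPMF μ) (x : X) : μ x ≤ 1 :=
  hμ.2 ▸ Finset.single_le_sum (fun x' _ => hμ.1 x') (Finset.mem_univ x)

section RelativeEntropy

variable {X : Type*} [Fintype X] {μ ν : X → ℝ}

lemma sum_mul_log_div_eq_crossEntropy_sub (hac : ∀ x, ν x = 0 → μ x = 0) :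
    ∑ x, μ x * Real.log (μ x / ν x) = crossEntropy μ ν - crossEntropy μ μ := by
  rw [crossEntropy, crossEntropy, ← Finset.sum_sub_distrib]
  refine Finset.sum_congr rfl fun x _ => ?_
  by_cases hμx : μ x = 0
  · simp only [hμx, zero_mul, sub_zero]
  · have hνx : ν x ≠ 0 := mt (hac x) hμx
    rw [Real.log_div hμx hνx, one_div, one_div, Real.log_inv, Real.log_inv]
    ring

lemma KLdiv_eq_ofReal_crossEntropy_sub (hac : ∀ x, ν x = 0 → μ x = 0) :
    KLdiv μ ν = ENNReal.ofReal (crossEntropy μ ν - crossEntropy μ μ) := by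
  rw [KLdiv, if_pos hac, sum_mul_log_div_eq_crossEntropy_sub hac]

lemma crossEntropy_self_le (hμ : ∀ x, 0 ≤ μ x) (hν : ∀ x, 0 ≤ ν x)
    (hsum : ∑ x, ν x ≤ ∑ x, μ x) (hac : ∀ x, ν x = 0 → μ x = 0) :
    crossEntropy μ μ ≤ crossEntropy μ ν := by
  have tangent_bound (x : X) : μ x - ν x ≤ μ x * Real.log (μ x / ν x) := by
    rcases (hν x).eq_or_lt' with hνx | hνx
    · simp only [hνx, hac x hνx, sub_zero, zero_mul, le_refl]
    · have hkl : 0 ≤ ν x * InformationTheory.klFun (μ x / ν x) :=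
        mul_nonneg hνx.le (InformationTheory.klFun_nonneg (div_nonneg (hμ x) hνx.le))
      have hexpand : ν x * InformationTheory.klFun (μ x / ν x) =
          μ x * Real.log (μ x / ν x) + ν x - μ x := by
        rw [InformationTheory.klFun]
        field_simp
      linarith
  rw [← sub_nonneg, ← sum_mul_log_div_eq_crossEntropy_sub hac]
  calc
    0 ≤ ∑ x, (μ x - ν x) := by rwa [Finset.sum_sub_distrib, sub_nonneg]
    _ ≤ ∑ x, μ x * Real.log (μ x / ν x) := Finset.sum_le_sum fun x _ => tangent_bound x

end RelativeEntropy

section PointMass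

variable {X : Type*} [Fintype X] [DecidableEq X]

lemma isPMF_single (a : X) : IsPMF (Pi.single a 1 : X → ℝ) :=
  single_mem_stdSimplex ℝ a

lemma crossEntropy_single (a : X) (ν : X → ℝ) :
    crossEntropy (Pi.single a 1) ν = Real.log (1 / ν a) := by
  simp [crossEntropy, Pi.single_apply]

lemma KLdiv_single {a : X} {ν : X → ℝ} (ha : ν a ≠ 0) :
    KLdiv (Pi.single a 1) ν = ENNReal.ofReal (Real.log (1 / ν a)) := by
  have hac (x : X) (hx : ν x = 0) : (Pi.single a 1 : X → ℝ) x = 0 :=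
    Pi.single_eq_of_ne (fun hxa : x = a => ha (hxa ▸ hx)) 1
  rw [KLdiv_eq_ofReal_crossEntropy_sub hac, crossEntropy_single, crossEntropy_single,
    Pi.single_eq_same, div_one, Real.log_one, sub_zero]

end PointMass

section ProductPMF

variable {X Y : Type*} {μ : X → ℝ} {ν : Y → ℝ}

lemma sum_productPMF_snd [Fintype Y] (μ : X → ℝ) (hν : ∑ y, ν y = 1) (x : X) :
    ∑ y, productPMF μ ν (x, y) = μ x := by
  simp only [productPMF, ← Finset.mul_sum, hν, mul_one]

lemma sum_productPMF_fst [Fintype X] (hμ : ∑ x, μ x = 1) (ν : Y → ℝ) (y : Y) :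
    ∑ x, productPMF μ ν (x, y) = ν y := by
  simp only [productPMF, ← Finset.sum_mul, hμ, one_mul]

variable [Fintype X] [Fintype Y]

lemma IsPMF.prod (hμ : IsPMF μ) (hν : IsPMF ν) : IsPMF (productPMF μ ν) := by
  refine ⟨fun z => mul_nonneg (hμ.1 z.1) (hν.1 z.2), ?_⟩
  simp only [Fintype.sum_prod_type, sum_productPMF_snd μ hν.2, hμ.2]

lemma condKLdiv_productPMF (μ : X → ℝ) (hν : ∑ y, ν y = 1) (p : X → Y → ℝ) :
    condKLdiv (productPMF μ ν) p =
      ∑ x ∈ Finset.univ.filter (fun x => 0 < μ x), ENNReal.ofReal (μ x) * KLdiv ν (p x) := by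
  simp only [condKLdiv, sum_productPMF_snd μ hν]
  refine Finset.sum_congr rfl fun x hx => ?_
  have hμx : μ x ≠ 0 := (Finset.mem_filter.1 hx).2.ne'
  simp only [productPMF, mul_div_cancel_left₀ _ hμx]

variable [DecidableEq X]

lemma condKLdiv_productPMF_single (a : X) (hν : ∑ y, ν y = 1) (p : X → Y → ℝ) :
    condKLdiv (productPMF (Pi.single a 1) ν) p = KLdiv ν (p a) := by
  have hsupport : Finset.univ.filter (fun x => 0 < (Pi.single a 1 : X → ℝ) x) = {a} := by
    ext x
    by_cases hx : x = a <;> simp [hx]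
  rw [condKLdiv_productPMF _ hν, hsupport, Finset.sum_singleton, Pi.single_eq_same,
    ENNReal.ofReal_one, one_mul]

lemma eq_productPMF_single {π : X × Y → ℝ} {a : X} (hπ : ∀ z, 0 ≤ π z)
    (hfst : ∀ x, x ≠ a → ∑ y, π (x, y) = 0) (hsnd : ∀ y, ∑ x, π (x, y) = ν y) :
    π = productPMF (Pi.single a 1) ν := by
  have hzero (x : X) (hx : x ≠ a) (y : Y) : π (x, y) = 0 :=
    (Finset.sum_eq_zero_iff_of_nonneg fun y _ => hπ (x, y)).1 (hfst x hx) y (Finset.mem_univ y)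
  funext ⟨x, y⟩
  by_cases hx : x = a
  · subst hx
    rw [productPMF, Pi.single_eq_same, one_mul, ← hsnd y]
    exact (Fintype.sum_eq_single x fun x' hx' => hzero x' hx' y).symm
  · rw [productPMF, Pi.single_eq_of_ne hx, zero_mul, hzero x hx y]

lemma isPMF_and_marginals_single_iff (hν : IsPMF ν) (a : X) (π : X × Y → ℝ) :
    (IsPMF π ∧ (∀ x, ∑ y, π (x, y) = if x = a then 1 else 0) ∧ ∀ y, ∑ x, π (x, y) = ν y) ↔
      π = productPMF (Pi.single a 1) ν := by
  constructor
  · rintro ⟨hπ, hfst, hsnd⟩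
    exact eq_productPMF_single hπ.1 (fun x hx => (hfst x).trans (if_neg hx)) hsnd
  · rintro rfl
    have hδ := isPMF_single a
    exact ⟨hδ.prod hν,
      fun x => (sum_productPMF_snd _ hν.2 x).trans (Pi.single_apply a 1 x),
      sum_productPMF_fst hδ.2 ν⟩

end ProductPMF

/-- Regularizers as priors: the inconsistency of believing a trusted data
distribution `D` on `Y`, a model `p(Y|Θ)`, a prior `q(Θ)` with confidence
`β`, and the event `Θ = θ₀`, equals the cross-entropy loss of `p(·|θ₀)` on
`D`, plus the regularizer `β·log(1/q(θ₀))`, minus the constant `H(D)`. -/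
theorem regularized_loss_as_inconsistency
    {Θ Y : Type*} [Fintype Θ] [Fintype Y] [DecidableEq Θ]
    (p : Θ → Y → ℝ) (hp : ∀ θ, IsPMF (p θ))
    (q : Θ → ℝ) (hq : IsPMF q) (θ₀ : Θ) (hq₀ : 0 < q θ₀)
    (D : Y → ℝ) (hD : IsPMF D) (hpos : ∀ y, 0 < D y → 0 < p θ₀ y)
    (β : ℝ) (hβ : 0 ≤ β) :
    (⨅ μ : {μ : Θ × Y → ℝ // IsPMF μ
        ∧ (∀ θ, (∑ y, μ (θ, y)) = if θ = θ₀ then 1 else 0)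
        ∧ (∀ y, (∑ θ, μ (θ, y)) = D y)},
        (∑ θ ∈ Finset.univ.filter (fun θ => 0 < ∑ y, μ.1 (θ, y)),
          ENNReal.ofReal (∑ y, μ.1 (θ, y)) *
            KLdiv (fun y => μ.1 (θ, y) / ∑ y', μ.1 (θ, y')) (p θ))
        + ENNReal.ofReal β * KLdiv (fun θ => ∑ y, μ.1 (θ, y)) q)
      = ENNReal.ofReal
          ((∑ y, D y * Real.log (1 / p θ₀ y))
            + β * Real.log (1 / q θ₀)
            - (∑ y, D y * Real.log (1 / D y))) := by
  have hac (y : Y) (hy : p θ₀ y = 0) : D y = 0 :=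
    le_antisymm (not_lt.1 fun hDy => (hpos y hDy).ne' hy) (hD.1 y)
  have hgibbs : 0 ≤ crossEntropy D (p θ₀) - crossEntropy D D :=
    sub_nonneg.2 (crossEntropy_self_le hD.1 (hp θ₀).1 ((hp θ₀).2.trans hD.2.symm).le hac)
  have hreg : 0 ≤ β * Real.log (1 / q θ₀) :=
    mul_nonneg hβ (Real.log_nonneg ((one_le_div hq₀).2 (hq.le_one θ₀)))
  calc
    _ = condKLdiv (productPMF (Pi.single θ₀ 1) D) p + ENNReal.ofReal β *
          KLdiv (fun θ => ∑ y, productPMF (Pi.single θ₀ 1) D (θ, y)) q := by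
      simp only [iInf_subtype, isPMF_and_marginals_single_iff hD, iInf_iInf_eq_left, condKLdiv]
    _ = KLdiv D (p θ₀) + ENNReal.ofReal β * KLdiv (Pi.single θ₀ 1) q := by
      simp only [condKLdiv_productPMF_single _ hD.2, sum_productPMF_snd _ hD.2]
    _ = ENNReal.ofReal (crossEntropy D (p θ₀) - crossEntropy D D +
          β * Real.log (1 / q θ₀)) := by
      rw [KLdiv_eq_ofReal_crossEntropy_sub hac, KLdiv_single hq₀.ne', ← ENNReal.ofReal_mul hβ,
        ← ENNReal.ofReal_add hgibbs hreg]
    _ = _ := by rw [sub_add_eq_add_sub]; rfl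
end

section
/- Let X be a finite type, let p and q be pmfs on X, and let r, s > 0. Then the infimum over all pmfs μ on X of r·D(μ‖p) + s·D(μ‖q) equals −(r+s)·log Σ_x ( p(x)^r · q(x)^s )^{1/(r+s)}, where both sides take values in [0,∞] (the right side being ∞ when the sum is 0, i.e., when p and q have disjoint supports). -/
open scoped BigOperators ENNReal

/-!
Let `g = (∏ i, p i ^ r i) ^ (1 / R)` with `R = ∑ i, r i`, and let `Z = ∑ x, g x`. Comparing
logarithms pointwise gives the compensation identity
`∑ i, r i · D(μ‖p i) = R · D(μ‖g / Z) - R · log Z`,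
in which `μ` only enters through a nonnegative term that vanishes at `μ = g / Z`. By the
weighted AM-GM inequality `Z ≤ 1`, so the identity holds between elements of `[0,∞]`.
-/

theorem sub_le_mul_log_div {a b : ℝ} (ha : 0 ≤ a) (hb : 0 ≤ b) (hab : b = 0 → a = 0) :
    a - b ≤ a * Real.log (a / b) := by
  rcases ha.eq_or_lt with rfl | ha
  · simpa using hb
  have hb : 0 < b := hb.lt_of_ne' (mt hab ha.ne')
  calc a - b = a * (1 - (a / b)⁻¹) := by field_simp
    _ ≤ a * Real.log (a / b) :=
      mul_le_mul_of_nonneg_left (Real.one_sub_inv_le_log_of_pos (div_pos ha hb)) ha.le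

section RelativeEntropy

variable {X : Type*} [Fintype X]

theorem sum_mul_log_div_nonneg {μ ν : X → ℝ} (hμ : ∀ x, 0 ≤ μ x) (hν : ∀ x, 0 ≤ ν x)
    (hac : ∀ x, ν x = 0 → μ x = 0) (hsum : ∑ x, ν x ≤ ∑ x, μ x) :
    0 ≤ ∑ x, μ x * Real.log (μ x / ν x) :=
  calc 0 ≤ ∑ x, (μ x - ν x) := by rwa [Finset.sum_sub_distrib, sub_nonneg]
    _ ≤ ∑ x, μ x * Real.log (μ x / ν x) :=
      Finset.sum_le_sum fun x _ => sub_le_mul_log_div (hμ x) (hν x) (hac x)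

theorem KLdiv_self (μ : X → ℝ) : KLdiv μ μ = 0 := by simp [KLdiv]

/-- The function `w` rescaled to total mass one; it is the zero function when `∑ x, w x = 0`. -/
noncomputable def normalized (w : X → ℝ) (x : X) : ℝ := w x / ∑ y, w y

theorem isPMF_normalized {w : X → ℝ} (hw : ∀ x, 0 ≤ w x) (hZ : ∑ x, w x ≠ 0) :
    IsPMF (normalized w) := by
  refine ⟨fun x => div_nonneg (hw x) (Finset.sum_nonneg fun y _ => hw y), ?_⟩
  simp only [normalized]
  rw [← Finset.sum_div, div_self hZ]

theorem normalized_eq_zero_iff {w : X → ℝ} (hZ : ∑ x, w x ≠ 0) {x : X} :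
    normalized w x = 0 ↔ w x = 0 :=
  div_eq_zero_iff.trans (or_iff_left hZ)

end RelativeEntropy

section GeomMean

variable {X ι : Type*} [Fintype ι]

/-- The pointwise geometric mean of the functions `p i` with weights `r i`, which need not
sum to one. Its normalization is the minimizer of `∑ i, r i · D(μ‖p i)`. -/
noncomputable def geomMean (r : ι → ℝ) (p : ι → X → ℝ) (x : X) : ℝ :=
  (∏ i, p i x ^ r i) ^ (1 / ∑ i, r i)

variable {r : ι → ℝ} {p : ι → X → ℝ}

theorem geomMean_nonneg (hp : ∀ i x, 0 ≤ p i x) (x : X) : 0 ≤ geomMean r p x :=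
  Real.rpow_nonneg (Finset.prod_nonneg fun i _ => Real.rpow_nonneg (hp i x) _) _

theorem geomMean_pos {x : X} (hx : ∀ i, 0 < p i x) : 0 < geomMean r p x :=
  Real.rpow_pos_of_pos (Finset.prod_pos fun i _ => Real.rpow_pos_of_pos (hx i) _) _

theorem geomMean_eq_zero_iff [Nonempty ι] (hr : ∀ i, 0 < r i) (hp : ∀ i x, 0 ≤ p i x) {x : X} :
    geomMean r p x = 0 ↔ ∃ i, p i x = 0 := by
  have hR : 1 / ∑ i, r i ≠ 0 :=
    (one_div_pos.2 (Finset.sum_pos (fun i _ => hr i) Finset.univ_nonempty)).ne'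
  rw [geomMean,
    Real.rpow_eq_zero (Finset.prod_nonneg fun i _ => Real.rpow_nonneg (hp i x) _) hR,
    Finset.prod_eq_zero_iff]
  simp only [Finset.mem_univ, true_and, Real.rpow_eq_zero (hp _ x) (hr _).ne']

theorem sum_mul_log_geomMean (hR : ∑ i, r i ≠ 0) {x : X} (hx : ∀ i, 0 < p i x) :
    (∑ i, r i) * Real.log (geomMean r p x) = ∑ i, r i * Real.log (p i x) := by
  have hpow (i : ι) : 0 < p i x ^ r i := Real.rpow_pos_of_pos (hx i) _
  rw [geomMean, Real.log_rpow (Finset.prod_pos fun i _ => hpow i), ← mul_assoc,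
    mul_one_div_cancel hR, one_mul, Real.log_prod fun i _ => (hpow i).ne']
  exact Finset.sum_congr rfl fun i _ => Real.log_rpow (hx i) _

theorem sum_mul_log_div_eq_log_div_geomMean (hR : ∑ i, r i ≠ 0) {x : X} (hx : ∀ i, 0 < p i x)
    {m Z : ℝ} (hm : m ≠ 0) (hZ : Z ≠ 0) :
    ∑ i, r i * Real.log (m / p i x) =
      (∑ i, r i) * Real.log (m / (geomMean r p x / Z)) - (∑ i, r i) * Real.log Z := by
  have hg : geomMean r p x ≠ 0 := (geomMean_pos hx).ne'
  calc ∑ i, r i * Real.log (m / p i x)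
      = (∑ i, r i) * Real.log m - ∑ i, r i * Real.log (p i x) := by
        simp only [Real.log_div hm (hx _).ne', mul_sub, Finset.sum_sub_distrib, Finset.sum_mul]
    _ = (∑ i, r i) * Real.log (m / (geomMean r p x / Z)) - (∑ i, r i) * Real.log Z := by
        rw [← sum_mul_log_geomMean hR hx, Real.log_div hm (div_ne_zero hg hZ),
          Real.log_div hg hZ]
        ring

variable [Fintype X]

theorem sum_geomMean_le_one (hr : ∀ i, 0 ≤ r i) (hR : 0 < ∑ i, r i) (hp : ∀ i x, 0 ≤ p i x)
    (hp_sum : ∀ i, ∑ x, p i x ≤ 1) : ∑ x, geomMean r p x ≤ 1 := by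
  have am_gm (x : X) : geomMean r p x ≤ (∑ i, r i * p i x) / ∑ i, r i := by
    rw [geomMean, one_div]
    exact Real.geom_mean_le_arith_mean _ _ _ (fun i _ => hr i) hR fun i _ => hp i x
  calc ∑ x, geomMean r p x
      ≤ ∑ x, (∑ i, r i * p i x) / ∑ i, r i := Finset.sum_le_sum fun x _ => am_gm x
    _ = (∑ i, r i * ∑ x, p i x) / ∑ i, r i := by
      simp only [Finset.mul_sum, ← Finset.sum_div]
      rw [Finset.sum_comm]
    _ ≤ 1 := (div_le_one hR).2 <|
      Finset.sum_le_sum fun i _ => mul_le_of_le_one_right (hr i) (hp_sum i)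

theorem neg_sum_mul_log_sum_geomMean_nonneg (hr : ∀ i, 0 ≤ r i) (hR : 0 < ∑ i, r i)
    (hp : ∀ i x, 0 ≤ p i x) (hp_sum : ∀ i, ∑ x, p i x ≤ 1) :
    0 ≤ -(∑ i, r i) * Real.log (∑ x, geomMean r p x) :=
  mul_nonneg_of_nonpos_of_nonpos (neg_nonpos.2 hR.le) <|
    Real.log_nonpos (Finset.sum_nonneg fun x _ => geomMean_nonneg hp x)
      (sum_geomMean_le_one hr hR hp hp_sum)

variable {μ : X → ℝ}

theorem sum_mul_sum_mul_log_div (hR : ∑ i, r i ≠ 0) (hp : ∀ i x, 0 ≤ p i x)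
    (hZ : ∑ x, geomMean r p x ≠ 0) (hμ : ∑ x, μ x = 1) (hac : ∀ i x, p i x = 0 → μ x = 0) :
    ∑ i, r i * ∑ x, μ x * Real.log (μ x / p i x) =
      (∑ i, r i) * ∑ x, μ x * Real.log (μ x / normalized (geomMean r p) x) +
        -(∑ i, r i) * Real.log (∑ x, geomMean r p x) := by
  set Z := ∑ x, geomMean r p x
  have hterm (x : X) : μ x * ∑ i, r i * Real.log (μ x / p i x) =
      (∑ i, r i) * (μ x * Real.log (μ x / normalized (geomMean r p) x)) -
        μ x * ((∑ i, r i) * Real.log Z) := by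
    rcases eq_or_ne (μ x) 0 with h | h
    · simp only [h, zero_mul, mul_zero, sub_zero]
    · have hx (i : ι) : 0 < p i x := (hp i x).lt_of_ne' (mt (hac i x) h)
      rw [normalized, sum_mul_log_div_eq_log_div_geomMean hR hx h hZ, mul_sub, mul_left_comm]
  calc ∑ i, r i * ∑ x, μ x * Real.log (μ x / p i x)
      = ∑ x, μ x * ∑ i, r i * Real.log (μ x / p i x) := by
        simp only [Finset.mul_sum, mul_left_comm (r _)]
        exact Finset.sum_comm
    _ = (∑ i, r i) * ∑ x, μ x * Real.log (μ x / normalized (geomMean r p) x) -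
          (∑ x, μ x) * ((∑ i, r i) * Real.log Z) := by
        rw [Finset.sum_congr rfl fun x _ => hterm x, Finset.sum_sub_distrib,
          ← Finset.mul_sum, ← Finset.sum_mul]
    _ = _ := by rw [hμ]; ring

theorem sum_mul_KLdiv_eq_top [Nonempty ι] (hr : ∀ i, 0 < r i) (hp : ∀ i x, 0 ≤ p i x) {x : X}
    (hg : geomMean r p x = 0) (hμ : μ x ≠ 0) :
    ∑ i, ENNReal.ofReal (r i) * KLdiv μ (p i) = ⊤ := by
  obtain ⟨i, hpx⟩ := (geomMean_eq_zero_iff hr hp).1 hg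
  have hKL : KLdiv μ (p i) = ⊤ := if_neg fun hac => hμ (hac x hpx)
  refine ENNReal.sum_eq_top.2 ⟨i, Finset.mem_univ i, ?_⟩
  rw [hKL, ENNReal.mul_top (ENNReal.ofReal_pos.2 (hr i)).ne']

theorem sum_mul_KLdiv_eq_add [Nonempty ι] (hr : ∀ i, 0 < r i) (hp : ∀ i x, 0 ≤ p i x)
    (hp_sum : ∀ i, ∑ x, p i x ≤ 1) (hZ : ∑ x, geomMean r p x ≠ 0) (hμ : IsPMF μ) :
    ∑ i, ENNReal.ofReal (r i) * KLdiv μ (p i) =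
      ENNReal.ofReal (∑ i, r i) * KLdiv μ (normalized (geomMean r p)) +
        ENNReal.ofReal (-(∑ i, r i) * Real.log (∑ x, geomMean r p x)) := by
  have hR : 0 < ∑ i, r i := Finset.sum_pos (fun i _ => hr i) Finset.univ_nonempty
  by_cases hac : ∀ x, geomMean r p x = 0 → μ x = 0
  · have hacp (i : ι) (x : X) (h : p i x = 0) : μ x = 0 :=
      hac x ((geomMean_eq_zero_iff hr hp).2 ⟨i, h⟩)
    have hacg (x : X) (h : normalized (geomMean r p) x = 0) : μ x = 0 :=
      hac x ((normalized_eq_zero_iff hZ).1 h)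
    have hg : IsPMF (normalized (geomMean r p)) := isPMF_normalized (geomMean_nonneg hp) hZ
    have hKLp (i : ι) : 0 ≤ ∑ x, μ x * Real.log (μ x / p i x) :=
      sum_mul_log_div_nonneg hμ.1 (hp i) (hacp i) ((hp_sum i).trans hμ.2.ge)
    have hKLg : 0 ≤ ∑ x, μ x * Real.log (μ x / normalized (geomMean r p) x) :=
      sum_mul_log_div_nonneg hμ.1 hg.1 hacg (hg.2.trans hμ.2.symm).le
    simp only [KLdiv, if_pos (hacp _), if_pos hacg, ← ENNReal.ofReal_mul (hr _).le]
    rw [← ENNReal.ofReal_sum_of_nonneg fun i _ => mul_nonneg (hr i).le (hKLp i),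
      sum_mul_sum_mul_log_div hR.ne' hp hZ hμ.2 hacp, ← ENNReal.ofReal_mul hR.le,
      ENNReal.ofReal_add (mul_nonneg hR.le hKLg)
        (neg_sum_mul_log_sum_geomMean_nonneg (fun i => (hr i).le) hR hp hp_sum)]
  · push Not at hac
    obtain ⟨x, hgx, hμx⟩ := hac
    have hKLg : KLdiv μ (normalized (geomMean r p)) = ⊤ :=
      if_neg fun h => hμx (h x ((normalized_eq_zero_iff hZ).2 hgx))
    rw [sum_mul_KLdiv_eq_top hr hp hgx hμx, hKLg,
      ENNReal.mul_top (ENNReal.ofReal_pos.2 hR).ne', top_add]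

theorem pdg_divergence_closed_form_general [Nonempty ι] (hr : ∀ i, 0 < r i)
    (hp : ∀ i x, 0 ≤ p i x) (hp_sum : ∀ i, ∑ x, p i x ≤ 1) :
    (⨅ μ : {μ : X → ℝ // IsPMF μ}, ∑ i, ENNReal.ofReal (r i) * KLdiv μ.1 (p i)) =
      if ∑ x, geomMean r p x = 0 then ⊤
      else ENNReal.ofReal (-(∑ i, r i) * Real.log (∑ x, geomMean r p x)) := by
  split_ifs with hZ
  · refine iInf_eq_top.2 fun ⟨μ, hμ⟩ => ?_
    obtain ⟨x, hx, hμx⟩ : ∃ x ∈ Finset.univ, μ x ≠ 0 :=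
      Finset.exists_ne_zero_of_sum_ne_zero (hμ.2.trans_ne one_ne_zero)
    exact sum_mul_KLdiv_eq_top hr hp
      ((Finset.sum_eq_zero_iff_of_nonneg fun y _ => geomMean_nonneg hp y).1 hZ x hx) hμx
  · have hg : IsPMF (normalized (geomMean r p)) := isPMF_normalized (geomMean_nonneg hp) hZ
    refine le_antisymm (iInf_le_of_le ⟨_, hg⟩ ?_) (le_iInf fun μ => ?_)
    · rw [sum_mul_KLdiv_eq_add hr hp hp_sum hZ hg, KLdiv_self, mul_zero, zero_add]
    · rw [sum_mul_KLdiv_eq_add hr hp hp_sum hZ μ.2]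
      exact le_add_self

end GeomMean

/-- Closed form for the PDG divergence: the infimum over pmfs `μ` of
`r·D(μ‖p) + s·D(μ‖q)` equals `−(r+s)·log Σ_x (p(x)^r q(x)^s)^{1/(r+s)}`,
both sides being `∞` exactly when `p` and `q` have disjoint supports. -/
theorem pdg_divergence_closed_form
    {X : Type*} [Fintype X]
    (p q : X → ℝ) (hp : IsPMF p) (hq : IsPMF q)
    (r s : ℝ) (hr : 0 < r) (hs : 0 < s) :
    (⨅ μ : {μ : X → ℝ // IsPMF μ},
        ENNReal.ofReal r * KLdiv μ.1 p + ENNReal.ofReal s * KLdiv μ.1 q)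
      = (if (∑ x, (p x ^ r * q x ^ s) ^ (1 / (r + s))) = 0 then ⊤
          else ENNReal.ofReal
            (-(r + s) * Real.log (∑ x, (p x ^ r * q x ^ s) ^ (1 / (r + s))))) := by
  simpa [geomMean] using pdg_divergence_closed_form_general (r := ![r, s]) (p := ![p, q])
    (Fin.forall_fin_two.2 ⟨hr, hs⟩) (Fin.forall_fin_two.2 ⟨hp.1, hq.1⟩)
    (Fin.forall_fin_two.2 ⟨hp.2.le, hq.2.le⟩)
end
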